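/- arXiv:2307.04267 — 2 statements merged into one kernel-verified Lean document; each statement's English description precedes it below -/
import Mathlib

section
/- For every d ≥ 2, the second-moment (two-fold) twirl over the unitary group U(d) with respect to its normalized Haar probability measure satisfies ∫_{U(d)} U ⊗ Ū ⊗ U ⊗ Ū dμ(U) = (1/(d²−1)) [ |I_d⟩⟨I_d| + |S_d⟩⟨S_d| − (1/d)( |I_d⟩⟨S_d| + |S_d⟩⟨I_d| ) ], where |I_d⟩ = Σ_{i,j=1}^{d} |i⟩⊗|i⟩⊗|j⟩⊗|j⟩ and |S_d⟩ = Σ_{i,j=1}^{d} |i⟩⊗|j⟩⊗|j⟩⊗|i⟩ in (ℂ^d)^{⊗4}, Ū is the entrywise complex conjugate of U, and ⊗ between matrices is the Kronecker product. -/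
/-! STATEMENT 18: the second-moment twirl over the unitary group U(d) with respect to the
normalized Haar probability measure is the two-dimensional (non-orthogonal) projection
(1/(d²−1))[|I⟩⟨I| + |S⟩⟨S| − (1/d)(|I⟩⟨S| + |S⟩⟨I|)] on (ℂ^d)^{⊗4}. -/

open Matrix MeasureTheory
open scoped Kronecker

noncomputable section

/-- The vector `|I_d⟩ = Σ_{i,j} |i⟩⊗|i⟩⊗|j⟩⊗|j⟩` in `(ℂ^d)^{⊗4}`. -/
def idVec (d : ℕ) : ((Fin d × Fin d) × Fin d) × Fin d → ℂ :=
  fun x => if x.1.1.1 = x.1.1.2 ∧ x.1.2 = x.2 then 1 else 0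

/-- The vector `|S_d⟩ = Σ_{i,j} |i⟩⊗|j⟩⊗|j⟩⊗|i⟩` in `(ℂ^d)^{⊗4}`. -/
def swapVec (d : ℕ) : ((Fin d × Fin d) × Fin d) × Fin d → ℂ :=
  fun x => if x.1.1.1 = x.2 ∧ x.1.1.2 = x.1.2 then 1 else 0

/-! Write `M` for the averaged matrix. By left invariance of `μ`, every column of `M` is fixed by
`V ⊗ V̄ ⊗ V ⊗ V̄` for each unitary `V` (`isTwirlInvariant_integral`). The fixed vectors are exactly
the combinations `p |I⟩ + q |S⟩` (`IsTwirlInvariant.exists_eq`): diagonal unitaries kill every entry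
`v a b c e` with `{a, c} ≠ {b, e}`, permutation matrices make the entries `v a a c c`, `v a c c a`
(`a ≠ c`) and `v a a a a` independent of the indices, and a single real reflection in a coordinate
plane forces the last value to be the sum of the first two.

The coefficients `p`, `q` of a given column follow by pairing it with `|I⟩` and `|S⟩`. Since the
columns of a unitary matrix are orthonormal, `⟨I|M = ⟨I|` and `⟨S|M = ⟨S|`, so `p`, `q` solve a
`2 × 2` linear system with matrix `[[d², d], [d, d²]]`, which is invertible for `d ≥ 2`.
-/

/-- `v` is fixed by `V ⊗ V̄ ⊗ V ⊗ V̄` for every unitary `V`; the four tensor legs are the four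
arguments of `v`, and the matrix action is written as iterated sums. -/
def IsTwirlInvariant {d : ℕ} (v : Fin d → Fin d → Fin d → Fin d → ℂ) : Prop :=
  ∀ V ∈ Matrix.unitaryGroup (Fin d) ℂ, ∀ a b c e, v a b c e =
    ∑ a', V a a' * ∑ b', (starRingEnd ℂ) (V b b') * ∑ c', V c c' *
      ∑ e', (starRingEnd ℂ) (V e e') * v a' b' c' e'

theorem IsTwirlInvariant.diag {d : ℕ} {v : Fin d → Fin d → Fin d → Fin d → ℂ}
    (hv : IsTwirlInvariant v) (k a b c e : Fin d) :
    v a b c e = (if a = k then Complex.I else 1) * ((if b = k then -Complex.I else 1) *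
      ((if c = k then Complex.I else 1) * ((if e = k then -Complex.I else 1) * v a b c e))) := by
  have hV : Matrix.diagonal (fun i => if i = k then Complex.I else 1) ∈
      Matrix.unitaryGroup (Fin d) ℂ := by
    rw [Matrix.mem_unitaryGroup_iff, Matrix.star_eq_conjTranspose,
      Matrix.diagonal_conjTranspose, Matrix.diagonal_mul_diagonal, ← Matrix.diagonal_one]
    congr 1
    funext i
    by_cases h : i = k <;> simp [h]
  have := hv _ hV a b c e
  simp only [Matrix.diagonal_apply, apply_ite (starRingEnd ℂ), map_zero, map_one, Complex.conj_I,
    ite_mul, zero_mul, Finset.sum_ite_eq, Finset.mem_univ, if_true] at this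
  simpa only [ite_mul, one_mul] using this

theorem IsTwirlInvariant.perm {d : ℕ} {v : Fin d → Fin d → Fin d → Fin d → ℂ}
    (hv : IsTwirlInvariant v) (σ : Equiv.Perm (Fin d)) (a b c e : Fin d) :
    v a b c e = v (σ a) (σ b) (σ c) (σ e) := by
  have hV : (Matrix.of fun i j => if σ i = j then (1 : ℂ) else 0) ∈
      Matrix.unitaryGroup (Fin d) ℂ := by
    rw [Matrix.mem_unitaryGroup_iff]
    ext i j
    simp [Matrix.mul_apply, Matrix.star_apply, Matrix.one_apply, eq_comm]
  have := hv _ hV a b c e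
  simpa only [Matrix.of_apply, apply_ite (starRingEnd ℂ), map_zero, map_one,
    ite_mul, zero_mul, one_mul, Finset.sum_ite_eq, Finset.mem_univ, if_true] using this

/-- The entry `v a b c e` of an invariant vector vanishes unless `{a, c} = {b, e}` as multisets:
compare the phases produced by `diag(1, …, i, …, 1)`. The phase is `i ^ n` with `|n| ≤ 2`, so it
is trivial only for `n = 0`. -/
theorem IsTwirlInvariant.eq_zero {d : ℕ} {v : Fin d → Fin d → Fin d → Fin d → ℂ}
    (hv : IsTwirlInvariant v) {a b c e : Fin d}
    (h₁ : ¬ (a = b ∧ c = e)) (h₂ : ¬ (a = e ∧ b = c)) : v a b c e = 0 := by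
  have key : ∀ z : ℂ, (z ≠ 1) → v a b c e = z * v a b c e → v a b c e = 0 := by
    intro z hz h
    by_contra hne
    exact hz (mul_right_cancel₀ hne (by rw [one_mul, ← h]))
  have hI : Complex.I ≠ 1 := fun h => by simpa using congrArg Complex.re h
  have hI' : -Complex.I ≠ 1 := fun h => by simpa using congrArg Complex.re h
  have hm : (-1 : ℂ) ≠ 1 := by norm_num
  have ha := hv.diag a a b c e
  have hc := hv.diag c a b c e
  -- Some index among `a`, `c` occurs more often in `{a, c}` than in `{b, e}`; its phase is not `1`.
  by_cases hab : a = b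
  · subst hab
    have hce : c ≠ e := fun h => h₁ ⟨rfl, h⟩
    by_cases hac : a = c
    · subst hac
      refine key _ hI (ha.trans ?_)
      simp [hce.symm]
      linear_combination (-Complex.I * v a a a e) * Complex.I_sq
    · refine key _ hI (hc.trans ?_)
      simp [hac, hce.symm]
  · by_cases hae : a = e
    · subst hae
      have hbc : b ≠ c := fun h => h₂ ⟨rfl, h⟩
      by_cases hac : a = c
      · subst hac
        refine key _ hI (ha.trans ?_)
        simp [hbc]
        linear_combination (-Complex.I * v a b a a) * Complex.I_sq
      · refine key _ hI (hc.trans ?_)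
        simp [hac, hbc]
    · by_cases hac : a = c
      · subst hac
        refine key _ hm (ha.trans ?_)
        simp [Ne.symm hab, Ne.symm hae]
        linear_combination (v a b a e) * Complex.I_sq
      · refine key _ hI (ha.trans ?_)
        simp [Ne.symm hab, Ne.symm hae, Ne.symm hac]

/-- The reflection fixing the orthogonal complement of `w = e_x - 2 e_y` has `x`-th row
`(3/5) e_x + (4/5) e_y`, and turns invariance into a linear relation between the three kinds of
nonzero entries. -/
theorem IsTwirlInvariant.diag_eq_add {d : ℕ} {v : Fin d → Fin d → Fin d → Fin d → ℂ}
    (hv : IsTwirlInvariant v) {x y : Fin d} (hxy : x ≠ y) :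
    v x x x x = v x x y y + v x y y x := by
  set w : Fin d → ℂ := fun i => (if i = x then 1 else 0) - 2 * (if i = y then 1 else 0) with hw
  have hww : w ⬝ᵥ w = 5 := by
    simp [hw, dotProduct, sub_mul, mul_sub, Finset.sum_sub_distrib, hxy, hxy.symm]
    norm_num
  have hsw : star w = w := by
    funext i
    simp only [hw, Pi.star_apply]
    split_ifs <;> simp
  set V : Matrix (Fin d) (Fin d) ℂ := 1 - (2 / 5 : ℂ) • vecMulVec w w with hVdef
  have hV : V ∈ Matrix.unitaryGroup (Fin d) ℂ := by
    have hs : star V = V := by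
      rw [Matrix.star_eq_conjTranspose, hVdef, Matrix.conjTranspose_sub,
        Matrix.conjTranspose_smul, Matrix.conjTranspose_vecMulVec, hsw]
      simp
    rw [Matrix.mem_unitaryGroup_iff, hs, hVdef]
    simp only [sub_mul, mul_sub, one_mul, mul_one, smul_mul_assoc, mul_smul_comm,
      Matrix.vecMulVec_mul_vecMulVec, hww]
    ext i j
    simp [Matrix.vecMulVec_apply]
    ring
  have hrow : ∀ j, V x j = 3 / 5 * (if j = x then 1 else 0) + 4 / 5 * (if j = y then 1 else 0) := by
    intro j
    simp only [hVdef, hw, Matrix.sub_apply, Matrix.smul_apply, Matrix.vecMulVec_apply,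
      Matrix.one_apply, smul_eq_mul, hxy, eq_comm (a := x), if_true, if_false]
    split_ifs <;> norm_num
  have hconj : ∀ j, (starRingEnd ℂ) (V x j) = V x j := by
    intro j
    rw [hrow]
    split_ifs <;> simp [map_ofNat]
  have hsum : ∀ f : Fin d → ℂ, ∑ j, V x j * f j = 3 / 5 * f x + 4 / 5 * f y := by
    intro f
    simp [hrow, add_mul, Finset.sum_add_distrib]
  have h := hv V hV x x x x
  simp only [hconj, hsum] at h
  have hσ : ∀ a b c e, v a b c e = v (Equiv.swap x y a) (Equiv.swap x y b) (Equiv.swap x y c)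
    (Equiv.swap x y e) := hv.perm (Equiv.swap x y)
  have e1 := hσ y y y y
  have e2 := hσ y y x x
  have e3 := hσ y x x y
  simp only [Equiv.swap_apply_left, Equiv.swap_apply_right] at e1 e2 e3
  have z : ∀ {a b c e}, ¬ (a = b ∧ c = e) → ¬ (a = e ∧ b = c) → v a b c e = 0 :=
    fun h₁ h₂ => hv.eq_zero h₁ h₂
  rw [e1, e2, e3, z (a := x) (b := x) (c := x) (e := y), z (a := x) (b := x) (c := y) (e := x),
    z (a := x) (b := y) (c := x) (e := x), z (a := y) (b := x) (c := x) (e := x),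
    z (a := x) (b := y) (c := y) (e := y), z (a := y) (b := x) (c := y) (e := y),
    z (a := y) (b := y) (c := x) (e := y), z (a := y) (b := y) (c := y) (e := x),
    z (a := x) (b := y) (c := x) (e := y), z (a := y) (b := x) (c := y) (e := x)] at h
  · linear_combination (625 / 288 : ℂ) * h
  all_goals simp [hxy, hxy.symm]

/-- The space of invariant vectors is spanned by `|I_d⟩` and `|S_d⟩`. -/
theorem IsTwirlInvariant.exists_eq {d : ℕ} (hd : 2 ≤ d)
    {v : Fin d → Fin d → Fin d → Fin d → ℂ} (hv : IsTwirlInvariant v) :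
    ∃ p q : ℂ, ∀ a b c e, v a b c e =
      p * (if a = b ∧ c = e then 1 else 0) + q * (if a = e ∧ b = c then 1 else 0) := by
  obtain ⟨x, y, hxy⟩ : ∃ x y : Fin d, x ≠ y :=
    ⟨⟨0, by omega⟩, ⟨1, by omega⟩, by simp⟩
  -- The symmetric group acts transitively on ordered pairs of distinct indices.
  have htrans : ∀ a c : Fin d, a ≠ c → ∃ σ : Equiv.Perm (Fin d), σ a = x ∧ σ c = y := by
    intro a c hac
    refine ⟨Equiv.swap (Equiv.swap a x c) y * Equiv.swap a x, ?_, ?_⟩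
    · rw [Equiv.Perm.mul_apply, Equiv.swap_apply_left]
      refine Equiv.swap_apply_of_ne_of_ne ?_ hxy
      intro h
      apply hac
      apply (Equiv.swap a x).injective
      rw [Equiv.swap_apply_left]
      exact h
    · rw [Equiv.Perm.mul_apply, Equiv.swap_apply_left]
  refine ⟨v x x y y, v x y y x, fun a b c e => ?_⟩
  by_cases h₁ : a = b ∧ c = e
  · obtain ⟨rfl, rfl⟩ := h₁
    by_cases hac : a = c
    · subst hac
      rw [hv.perm (Equiv.swap a x) a a a a, Equiv.swap_apply_left, hv.diag_eq_add hxy]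
      simp
    · obtain ⟨σ, h1, h2⟩ := htrans a c hac
      rw [hv.perm σ, h1, h2]
      simp [hac]
  · by_cases h₂ : a = e ∧ b = c
    · obtain ⟨rfl, rfl⟩ := h₂
      have hab : a ≠ b := fun h => h₁ ⟨h, h.symm⟩
      obtain ⟨σ, h1, h2⟩ := htrans a b hab
      rw [hv.perm σ, h1, h2]
      simp [hab]
    · rw [hv.eq_zero h₁ h₂]
      simp [h₁, h₂]

/-- The monomial in the entries of `U` occurring in `U ⊗ Ū ⊗ U ⊗ Ū`. -/
def twirlEntry {d : ℕ} (U : Matrix (Fin d) (Fin d) ℂ) (a b c e a' b' c' e' : Fin d) : ℂ :=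
  U a a' * (starRingEnd ℂ) (U b b') * U c c' * (starRingEnd ℂ) (U e e')

theorem twirlEntry_mul {d : ℕ} (V U : Matrix (Fin d) (Fin d) ℂ) (a b c e a' b' c' e' : Fin d) :
    twirlEntry (V * U) a b c e a' b' c' e' =
      ∑ i, V a i * ∑ j, (starRingEnd ℂ) (V b j) * ∑ k, V c k *
        ∑ l, (starRingEnd ℂ) (V e l) * twirlEntry U i j k l a' b' c' e' := by
  simp only [twirlEntry, Matrix.mul_apply, map_sum, map_mul, mul_assoc]
  rw [Finset.sum_mul]
  refine Finset.sum_congr rfl fun i _ => ?_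
  rw [mul_assoc, Finset.sum_mul, Finset.mul_sum]
  congr 1
  refine Finset.sum_congr rfl fun j _ => ?_
  rw [mul_assoc, mul_left_comm, Finset.sum_mul, Finset.mul_sum, Finset.mul_sum]
  congr 1
  refine Finset.sum_congr rfl fun k _ => ?_
  simp only [Finset.mul_sum]
  exact Finset.sum_congr rfl fun l _ => by ring

theorem integrable_twirlEntry {d : ℕ}
    [MeasurableSpace (Matrix.unitaryGroup (Fin d) ℂ)]
    [BorelSpace (Matrix.unitaryGroup (Fin d) ℂ)]
    (μ : Measure (Matrix.unitaryGroup (Fin d) ℂ)) [IsFiniteMeasure μ]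
    (a b c e a' b' c' e' : Fin d) :
    Integrable (fun U : Matrix.unitaryGroup (Fin d) ℂ =>
      twirlEntry (U : Matrix (Fin d) (Fin d) ℂ) a b c e a' b' c' e') μ := by
  have hent : ∀ i j : Fin d, Continuous fun U : Matrix.unitaryGroup (Fin d) ℂ =>
      (U : Matrix (Fin d) (Fin d) ℂ) i j :=
    fun i j => continuous_subtype_val.matrix_elem i j
  refine Integrable.of_bound (C := 1) (Continuous.aestronglyMeasurable ?_)
    (Filter.Eventually.of_forall fun U => ?_)
  · exact (((hent a a').mul (Complex.continuous_conj.comp (hent b b'))).mul (hent c c')).mul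
      (Complex.continuous_conj.comp (hent e e'))
  · have hb := entry_norm_bound_of_unitary U.2
    simp only [twirlEntry, norm_mul, RCLike.norm_conj]
    exact mul_le_one₀ (mul_le_one₀ (mul_le_one₀ (hb a a') (norm_nonneg _) (hb b b'))
      (norm_nonneg _) (hb c c')) (norm_nonneg _) (hb e e')

/-- Left invariance of `μ` makes every column of the averaged matrix an invariant vector. -/
theorem isTwirlInvariant_integral {d : ℕ}
    [MeasurableSpace (Matrix.unitaryGroup (Fin d) ℂ)]
    [BorelSpace (Matrix.unitaryGroup (Fin d) ℂ)]
    (μ : Measure (Matrix.unitaryGroup (Fin d) ℂ)) [IsFiniteMeasure μ] [μ.IsMulLeftInvariant]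
    (a' b' c' e' : Fin d) :
    IsTwirlInvariant fun a b c e => ∫ U : Matrix.unitaryGroup (Fin d) ℂ,
      twirlEntry (U : Matrix (Fin d) (Fin d) ℂ) a b c e a' b' c' e' ∂μ := by
  intro V hV a b c e
  have hint := integrable_twirlEntry μ
  have h := integral_mul_left_eq_self (μ := μ) (fun U : Matrix.unitaryGroup (Fin d) ℂ =>
      twirlEntry (U : Matrix (Fin d) (Fin d) ℂ) a b c e a' b' c' e') ⟨V, hV⟩
  beta_reduce
  rw [← h]
  simp only [Submonoid.coe_mul, twirlEntry_mul]
  have i1 := fun i j k => integrable_finsetSum Finset.univ fun l _ =>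
    (hint i j k l a' b' c' e').const_mul ((starRingEnd ℂ) (V e l))
  have i2 := fun i j => integrable_finsetSum Finset.univ fun k _ => (i1 i j k).const_mul (V c k)
  have i3 := fun i => integrable_finsetSum Finset.univ fun j _ =>
    (i2 i j).const_mul ((starRingEnd ℂ) (V b j))
  rw [integral_finsetSum _ fun i _ => (i3 i).const_mul (V a i)]
  refine Finset.sum_congr rfl fun i _ => ?_
  rw [integral_const_mul, integral_finsetSum _ fun j _ => (i2 i j).const_mul _]
  congr 1
  refine Finset.sum_congr rfl fun j _ => ?_
  rw [integral_const_mul, integral_finsetSum _ fun k _ => (i1 i j k).const_mul _]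
  congr 1
  refine Finset.sum_congr rfl fun k _ => ?_
  rw [integral_const_mul, integral_finsetSum _ fun l _ => (hint i j k l a' b' c' e').const_mul _]
  congr 1
  refine Finset.sum_congr rfl fun l _ => ?_
  rw [integral_const_mul]

/-- Orthonormality of the columns of a unitary matrix. -/
theorem sum_mul_conj_of_unitary {d : ℕ} (U : Matrix.unitaryGroup (Fin d) ℂ) (i j : Fin d) :
    ∑ a, (U : Matrix (Fin d) (Fin d) ℂ) a i * (starRingEnd ℂ) ((U : Matrix (Fin d) (Fin d) ℂ) a j)
      = if i = j then 1 else 0 := by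
  have h := congrFun (congrFun (Matrix.mem_unitaryGroup_iff'.1 U.2) j) i
  rw [Matrix.mul_apply, Matrix.one_apply] at h
  simp only [Matrix.star_apply, eq_comm (a := j)] at h
  rw [← h]
  exact Finset.sum_congr rfl fun a _ => mul_comm _ _

theorem sum_twirlEntry_id {d : ℕ} (U : Matrix.unitaryGroup (Fin d) ℂ) (a' b' c' e' : Fin d) :
    ∑ a, ∑ c, twirlEntry (U : Matrix (Fin d) (Fin d) ℂ) a a c c a' b' c' e' =
      if a' = b' ∧ c' = e' then 1 else 0 := by
  have : ∀ p q : Prop, [Decidable p] → [Decidable q] →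
    (if p ∧ q then (1 : ℂ) else 0) = (if p then 1 else 0) * (if q then 1 else 0) := by
    intro p q _ _
    by_cases p <;> by_cases q <;> simp [*]
  rw [this, ← sum_mul_conj_of_unitary U, ← sum_mul_conj_of_unitary U, Finset.sum_mul_sum]
  simp only [twirlEntry, mul_assoc]

theorem sum_twirlEntry_swap {d : ℕ} (U : Matrix.unitaryGroup (Fin d) ℂ) (a' b' c' e' : Fin d) :
    ∑ a, ∑ c, twirlEntry (U : Matrix (Fin d) (Fin d) ℂ) a c c a a' b' c' e' =
      if a' = e' ∧ b' = c' then 1 else 0 := by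
  simp only [eq_comm (a := b')]
  rw [← sum_twirlEntry_id U]
  simp only [twirlEntry]
  exact Finset.sum_congr rfl fun a _ => Finset.sum_congr rfl fun c _ => by ring

/-- The twirl in terms of entries, with the right-hand side grouped by column:
the coefficients of a column along `|I_d⟩` and `|S_d⟩` solve the Gram system of these two vectors. -/
theorem integral_twirlEntry {d : ℕ} (hd : 2 ≤ d)
    [MeasurableSpace (Matrix.unitaryGroup (Fin d) ℂ)]
    [BorelSpace (Matrix.unitaryGroup (Fin d) ℂ)]
    (μ : Measure (Matrix.unitaryGroup (Fin d) ℂ)) [IsProbabilityMeasure μ] [μ.IsMulLeftInvariant]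
    (a b c e a' b' c' e' : Fin d) :
    ∫ U : Matrix.unitaryGroup (Fin d) ℂ,
      twirlEntry (U : Matrix (Fin d) (Fin d) ℂ) a b c e a' b' c' e' ∂μ =
    ((d : ℂ) ^ 2 - 1)⁻¹ *
      (((if a' = b' ∧ c' = e' then 1 else 0) - (d : ℂ)⁻¹ * (if a' = e' ∧ b' = c' then 1 else 0)) *
          (if a = b ∧ c = e then 1 else 0) +
        ((if a' = e' ∧ b' = c' then 1 else 0) - (d : ℂ)⁻¹ * (if a' = b' ∧ c' = e' then 1 else 0)) *
          (if a = e ∧ b = c then 1 else 0)) := by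
  have hint := integrable_twirlEntry μ
  obtain ⟨p, q, hpq⟩ := (isTwirlInvariant_integral μ a' b' c' e').exists_eq hd
  have h₁ : (d : ℂ) ^ 2 * p + d * q = if a' = b' ∧ c' = e' then 1 else 0 := by
    have h : ∑ a, ∑ c, ∫ U : Matrix.unitaryGroup (Fin d) ℂ,
        twirlEntry (U : Matrix (Fin d) (Fin d) ℂ) a a c c a' b' c' e' ∂μ =
        if a' = b' ∧ c' = e' then 1 else 0 := by
      simp_rw [← integral_finsetSum Finset.univ fun c _ => hint _ _ c c a' b' c' e']
      rw [← integral_finsetSum _ fun a _ => integrable_finsetSum _ fun c _ => hint _ _ _ _ _ _ _ _]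
      simp only [sum_twirlEntry_id, integral_const, probReal_univ, one_smul]
    rw [← h]
    simp only [hpq]
    simp [Finset.sum_add_distrib]
    ring
  have h₂ : (d : ℂ) * p + (d : ℂ) ^ 2 * q = if a' = e' ∧ b' = c' then 1 else 0 := by
    have h : ∑ a, ∑ c, ∫ U : Matrix.unitaryGroup (Fin d) ℂ,
        twirlEntry (U : Matrix (Fin d) (Fin d) ℂ) a c c a a' b' c' e' ∂μ =
        if a' = e' ∧ b' = c' then 1 else 0 := by
      simp_rw [← integral_finsetSum Finset.univ fun c _ => hint _ c c _ a' b' c' e']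
      rw [← integral_finsetSum _ fun a _ => integrable_finsetSum _ fun c _ => hint _ _ _ _ _ _ _ _]
      simp only [sum_twirlEntry_swap, integral_const, probReal_univ, one_smul]
    rw [← h]
    simp only [hpq]
    have hc : ∀ a c : Fin d, (a = c ∧ c = a) ↔ a = c :=
      fun a c => ⟨And.left, fun h => ⟨h, h.symm⟩⟩
    simp [Finset.sum_add_distrib, hc]
    ring
  have hd0 : (d : ℂ) ≠ 0 := by
    exact_mod_cast (by omega : d ≠ 0)
  have hd1 : (d : ℂ) ^ 2 - 1 ≠ 0 := by
    rw [sub_ne_zero]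
    exact_mod_cast (by nlinarith : d ^ 2 ≠ 1)
  rw [hpq, ← h₁, ← h₂]
  field_simp
  ring

/-- for every `d ≥ 2` and every left-invariant Borel probability measure `μ`
on the unitary group `U(d)` (i.e. the normalized Haar measure), the entrywise (Bochner)
integral of `U ⊗ Ū ⊗ U ⊗ Ū` satisfies
`∫ U⊗Ū⊗U⊗Ū dμ = (1/(d²−1))[|I_d⟩⟨I_d| + |S_d⟩⟨S_d| − (1/d)(|I_d⟩⟨S_d| + |S_d⟩⟨I_d|)]`. -/
theorem stmt18 (d : ℕ) (hd : 2 ≤ d)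
    [MeasurableSpace (Matrix.unitaryGroup (Fin d) ℂ)]
    [BorelSpace (Matrix.unitaryGroup (Fin d) ℂ)]
    (μ : Measure (Matrix.unitaryGroup (Fin d) ℂ))
    [IsProbabilityMeasure μ] [μ.IsMulLeftInvariant] :
    ∀ x y : ((Fin d × Fin d) × Fin d) × Fin d,
      (∫ U : Matrix.unitaryGroup (Fin d) ℂ,
          ((U : Matrix (Fin d) (Fin d) ℂ) ⊗ₖ (U : Matrix (Fin d) (Fin d) ℂ).map (starRingEnd ℂ)
              ⊗ₖ (U : Matrix (Fin d) (Fin d) ℂ)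
              ⊗ₖ (U : Matrix (Fin d) (Fin d) ℂ).map (starRingEnd ℂ)) x y ∂μ) =
        ((((d : ℂ) ^ 2 - 1)⁻¹) •
          (vecMulVec (idVec d) (star (idVec d)) + vecMulVec (swapVec d) (star (swapVec d)) -
            ((d : ℂ))⁻¹ •
              (vecMulVec (idVec d) (star (swapVec d)) +
                vecMulVec (swapVec d) (star (idVec d))))) x y := by
  rintro ⟨⟨⟨a, b⟩, c⟩, e⟩ ⟨⟨⟨a', b'⟩, c'⟩, e'⟩
  refine (integral_twirlEntry hd μ a b c e a' b' c' e').trans ?_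
  simp only [idVec, swapVec, Matrix.smul_apply, Matrix.sub_apply, Matrix.add_apply,
    Matrix.vecMulVec_apply, Pi.star_apply, smul_eq_mul, apply_ite (star : ℂ → ℂ), star_one,
    star_zero]
  ring

end
end

section
/- Let N ≥ 1, d_A = 2^N, d_A = d_R·d_B, and fix a subset of k of the N qubits (0 ≤ k ≤ N) and 0 ≤ λ < 3/4. Let the Kraus operators {E_m} of the noise be all tensor products, over the k chosen qubits, of the single-qubit depolarizing Kraus operators E₀ = √(1−λ)I₂, E_α = √(λ/3)σ^α (α∈{x,y,z}), tensored with the identity on the remaining N−k qubits (so d_E = 4^k). For a unitary U on ℂ^{d_A}, let 𝓕(U) = Tr(ρ'_{RE}²) − Tr(ρ'_R²)Tr(ρ'_E²) be the mutual purity of the state |Ψ'⟩ = (1/√d_R) Σ_{i=1}^{d_R} Σ_m |i⟩ ⊗ (E_m U(|i⟩⊗|0⟩)) ⊗ |m⟩. Then the Haar average over U(d_A) is ∫ 𝓕(U) dμ(U) = (d_A/(d_A²−1)) · (1 − 1/d_R²) · (1 − g(λ)^k), where g(λ) = (1−λ)² + λ²/3. -/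
/-!
Write `W` for the encoding isometry restricted to the reference, `P = W Wᴴ` for the code projector
(rank `r = d_R`) and `D = d_A`. Tracing out `A` gives `ρ_RE` the entries
`r⁻¹ (Wᴴ E_nᴴ E_m W)_{ji}`, so the mutual purity equals `r⁻² ∑_{m,n} Q_P(E_nᴴ E_m)` with
`Q_P(M) = Tr(P M P Mᴴ) - r⁻¹ |Tr(P M)|²` (`mutualPurity_eq`).

The Haar average of the sesquilinear form behind `Q_P` is invariant under unitary conjugation.
Such a form is `x Tr(M Mᴴ) + y |Tr M|²` (`invariant_form`): polarization reduces to Hermitian `M`,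
the spectral theorem to real diagonal `M`, and permutation invariance then leaves two parameters.
No representation theory is needed, and the two parameters follow from two pointwise identities,
`Q_P(1) = 0` and `∑_{a,b} Q_P(e_{ab}) = r² - 1` over the matrix units. The result
(`integral_purityForm`) is `(r² - 1)/(D² - 1) · (Tr(M Mᴴ) - |Tr M|²/D)`.

It remains to sum over the Kraus operators, which are Hermitian. Unitality gives
`∑_{m,n} Tr(M Mᴴ) = D` for `M = E_n E_m`, and factorization over the qubits gives
`∑_{m,n} |Tr M|² = D² g(λ)^k` (`krausN_trace_sum`).
-/


/-! STATEMENT 19: Haar-averaged mutual purity of a random encoding of a d_R-dimensional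
reference into N qubits followed by depolarizing noise of strength λ on k designated
qubits: ∫ 𝓕(U) dμ(U) = (d_A/(d_A²−1))·(1 − 1/d_R²)·(1 − g(λ)^k) with d_A = 2^N and
g(λ) = (1−λ)² + λ²/3. -/

open Matrix MeasureTheory

noncomputable section

/-- The Pauli matrices σ^x, σ^y, σ^z. -/
def pauli : Fin 3 → Matrix (Fin 2) (Fin 2) ℂ
  | 0 => !![0, 1; 1, 0]
  | 1 => !![0, -Complex.I; Complex.I, 0]
  | 2 => !![1, 0; 0, -1]

/-- The single-qubit depolarizing Kraus operators
`E₀ = √(1-λ)·I`, `E_α = √(λ/3)·σ^α` for `α ∈ {x,y,z}`. -/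
def krausDepol (lam : ℝ) : Fin 4 → Matrix (Fin 2) (Fin 2) ℂ
  | 0 => ((Real.sqrt (1 - lam) : ℝ) : ℂ) • 1
  | 1 => ((Real.sqrt (lam / 3) : ℝ) : ℂ) • pauli 0
  | 2 => ((Real.sqrt (lam / 3) : ℝ) : ℂ) • pauli 1
  | 3 => ((Real.sqrt (lam / 3) : ℝ) : ℂ) • pauli 2

/-- Computational basis of the `N`-qubit system `A`, of dimension `d_A = 2^N`. -/
abbrev QIdx (N : ℕ) := Fin N → Fin 2

/-- The Kraus operator of the noise indexed by `m : S → Fin 4`: the tensor product, over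
the designated noisy qubits `i ∈ S`, of the single-qubit depolarizing Kraus operators
`krausDepol lam (m i)`, tensored with the identity on the remaining qubits
(environment dimension `d_E = 4^|S|`). -/
def krausN (N : ℕ) (S : Finset (Fin N)) (lam : ℝ) (m : {x // x ∈ S} → Fin 4) :
    Matrix (QIdx N) (QIdx N) ℂ :=
  Matrix.of fun f g => ∏ i : Fin N,
    (if h : i ∈ S then krausDepol lam (m ⟨i, h⟩) else 1) (f i) (g i)

/-- The global state `|Ψ'⟩ = (1/√d_R) Σ_{i,m} |i⟩ ⊗ (E_m U|i0⟩) ⊗ |m⟩` on `R ⊗ A ⊗ E`,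
where `|i0⟩ = emb i` embeds the reference basis into computational basis states of `A`. -/
def psi' (N dR : ℕ) (S : Finset (Fin N)) (lam : ℝ) (emb : Fin dR → QIdx N)
    (U : Matrix (QIdx N) (QIdx N) ℂ) :
    Fin dR × QIdx N × ({x // x ∈ S} → Fin 4) → ℂ :=
  fun x =>
    ((Real.sqrt dR : ℝ) : ℂ)⁻¹ *
      ((krausN N S lam x.2.2).mulVec (U.mulVec fun q => if q = emb x.1 then 1 else 0)) x.2.1

/-- The mutual purity `𝓕(U) = Tr(ρ'_{RE}²) − Tr(ρ'_R²)·Tr(ρ'_E²)` of `|Ψ'⟩`. -/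
def mutualPurity (N dR : ℕ) (S : Finset (Fin N)) (lam : ℝ) (emb : Fin dR → QIdx N)
    (U : Matrix (QIdx N) (QIdx N) ℂ) : ℂ :=
  let ψ := psi' N dR S lam emb U
  let rhoRE : Matrix (Fin dR × ({x // x ∈ S} → Fin 4)) (Fin dR × ({x // x ∈ S} → Fin 4)) ℂ :=
    Matrix.of fun x y => ∑ a : QIdx N, ψ (x.1, a, x.2) * star (ψ (y.1, a, y.2))
  let rhoR : Matrix (Fin dR) (Fin dR) ℂ :=
    Matrix.of fun i j => ∑ a : QIdx N, ∑ m : {x // x ∈ S} → Fin 4,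
      ψ (i, a, m) * star (ψ (j, a, m))
  let rhoE : Matrix ({x // x ∈ S} → Fin 4) ({x // x ∈ S} → Fin 4) ℂ :=
    Matrix.of fun m n => ∑ i : Fin dR, ∑ a : QIdx N, ψ (i, a, m) * star (ψ (i, a, n))
  (rhoRE * rhoRE).trace - (rhoR * rhoR).trace * (rhoE * rhoE).trace

/-! ### Unitarily invariant sesquilinear forms on matrices -/

/-- Sesquilinear forms on the square matrices with index type `n`. -/
abbrev MatForm (n : Type*) [Fintype n] :=
  Matrix n n ℂ →ₗ[ℂ] Matrix n n ℂ →ₗ⋆[ℂ] ℂ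

theorem permMatrix_mem {n : Type*} [Fintype n] [DecidableEq n] (σ : Equiv.Perm n) :
    σ.permMatrix ℂ ∈ unitaryGroup n ℂ := by
  rw [mem_unitaryGroup_iff, star_eq_conjTranspose, conjTranspose_permMatrix, ← permMatrix_mul]
  simp

theorem permMatrix_conj_single {n : Type*} [Fintype n] [DecidableEq n] (σ : Equiv.Perm n)
    (a : n) :
    σ.permMatrix ℂ * single (σ a) (σ a) (1 : ℂ) * (σ.permMatrix ℂ)ᴴ = single a a 1 := by
  rw [conjTranspose_permMatrix]
  ext i j
  simp [PEquiv.toMatrix_toPEquiv_mul, PEquiv.mul_toMatrix_toPEquiv, single_apply, Equiv.Perm.inv_def]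

theorem exists_perm_pair {n : Type*} [DecidableEq n] {a b a' b' : n} (h : a ≠ b) (h' : a' ≠ b') :
    ∃ σ : Equiv.Perm n, σ a = a' ∧ σ b = b' := by
  have h1 : Equiv.swap a a' b ≠ a' := by
    intro hc
    apply h
    have := congrArg (Equiv.swap a a') hc
    simpa using this.symm
  refine ⟨(Equiv.swap a a').trans (Equiv.swap (Equiv.swap a a' b) b'), ?_, ?_⟩
  · simp [Equiv.swap_apply_of_ne_of_ne h1.symm h']
  · simp

/-- On diagonal matrices a form only sees its values on the diagonal matrix units. -/
theorem form_diagonal {n : Type*} [Fintype n] [DecidableEq n] (β : MatForm n) (v : n → ℂ) :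
    β (diagonal v) (diagonal v) =
      ∑ a, ∑ b, v a * star (v b) * β (single a a 1) (single b b 1) := by
  have hv : diagonal v = ∑ a, v a • single a a (1 : ℂ) := by
    simp [smul_single, sum_single_eq_diagonal]
  rw [hv]
  simp only [map_sum, map_smul, LinearMap.sum_apply, LinearMap.smul_apply, LinearMap.map_smulₛₗ,
    smul_eq_mul, mul_assoc, starRingEnd_apply, Finset.mul_sum]
  rw [Finset.sum_comm]
  exact Finset.sum_congr rfl fun a _ => Finset.sum_congr rfl fun b _ => mul_left_comm _ _ _

/-- The Hermitian and anti-Hermitian parts of a matrix are orthogonal for the diagonal of a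
star-symmetric form: star symmetry at `H + iK` says exactly that the cross terms cancel. -/
theorem form_cartesian {n : Type*} [Fintype n] (β : MatForm n)
    (hstar : ∀ M, β Mᴴ Mᴴ = β M M) (H K : Matrix n n ℂ) (hH : Hᴴ = H) (hK : Kᴴ = K) :
    β (H + Complex.I • K) (H + Complex.I • K) = β H H + β K K := by
  have h := hstar (H + Complex.I • K)
  simp only [conjTranspose_add, conjTranspose_smul, hH, hK, map_add, map_smul, LinearMap.add_apply,
    LinearMap.smul_apply, LinearMap.map_smulₛₗ, smul_eq_mul, Complex.star_def, Complex.conj_I,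
    map_neg, neg_smul, LinearMap.neg_apply] at h ⊢
  linear_combination (-1/2 : ℂ) * h - β K K * Complex.I_mul_I

/-- The Cartesian decomposition of a matrix into Hermitian and anti-Hermitian parts. -/
theorem exists_cartesian {n : Type*} [Fintype n] [DecidableEq n] (M : Matrix n n ℂ) :
    ∃ H K : Matrix n n ℂ, Hᴴ = H ∧ Kᴴ = K ∧ M = H + Complex.I • K := by
  refine ⟨(1/2 : ℂ) • (M + Mᴴ), (-Complex.I/2) • (M - Mᴴ), ?_, ?_, ?_⟩
  · simp [add_comm]
  · ext i j
    simp
    ring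
  · ext i j
    simp
    linear_combination (1/2 : ℂ) * (M i j - (starRingEnd ℂ) (M j i)) * Complex.I_mul_I

/-- A unitarily invariant, star-symmetric sesquilinear form on matrices is a combination of the
Hilbert–Schmidt form and the squared trace. By polarization and the spectral theorem only real
diagonal matrices matter, and there permutation invariance leaves two parameters. -/
theorem invariant_form {n : Type*} [Fintype n] [DecidableEq n] [Nontrivial n] (β : MatForm n)
    (hstar : ∀ M, β Mᴴ Mᴴ = β M M)
    (hinv : ∀ V ∈ unitaryGroup n ℂ, ∀ X Y, β (V * X * Vᴴ) (V * Y * Vᴴ) = β X Y) :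
    ∃ x y : ℂ, ∀ M, β M M = x * (M * Mᴴ).trace + y * (M.trace * star M.trace) := by
  obtain ⟨a₀, b₀, hab₀⟩ := exists_pair_ne n
  have hperm : ∀ (σ : Equiv.Perm n) a b, β (single (σ a) (σ a) 1) (single (σ b) (σ b) 1) =
      β (single a a 1) (single b b 1) := fun σ a b => by
    rw [← permMatrix_conj_single σ a, ← permMatrix_conj_single σ b, hinv _ (permMatrix_mem σ)]
  set y := β (single a₀ a₀ 1) (single b₀ b₀ 1) with hy
  set x := β (single a₀ a₀ 1) (single a₀ a₀ 1) - y with hx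
  have hβ : ∀ a b, β (single a a 1) (single b b 1) = (if a = b then x else 0) + y := by
    intro a b
    split_ifs with h
    · subst h
      rw [hx, ← hperm (Equiv.swap a₀ a) a₀ a₀]
      simp
    · obtain ⟨σ, rfl, rfl⟩ := exists_perm_pair hab₀ h
      rw [hperm, hy, zero_add]
  have hherm : ∀ H : Matrix n n ℂ, Hᴴ = H →
      β H H = x * (H * Hᴴ).trace + y * (H.trace * star H.trace) := by
    intro H hH
    have hH' : H.IsHermitian := hH
    have hs := hH'.spectral_theorem
    rw [Unitary.conjStarAlgAut_apply] at hs
    set V : Matrix n n ℂ := (hH'.eigenvectorUnitary : Matrix n n ℂ) with hV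
    set v : n → ℂ := RCLike.ofReal ∘ hH'.eigenvalues with hv
    have hVm : V ∈ unitaryGroup n ℂ := hH'.eigenvectorUnitary.2
    have hVV : Vᴴ * V = 1 := mem_unitaryGroup_iff'.1 hVm
    have hs' : H = V * diagonal v * Vᴴ := hs
    have ht : H.trace = ∑ a, v a := by
      rw [hs', trace_mul_cycle, hVV, one_mul, trace_diagonal]
    have ht2 : (H * Hᴴ).trace = ∑ a, v a * star (v a) := by
      have : H * Hᴴ = V * (diagonal v * diagonal (star v)) * Vᴴ := by
        rw [hs']
        simp only [conjTranspose_mul, conjTranspose_conjTranspose, diagonal_conjTranspose]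
        calc _ = V * diagonal v * (Vᴴ * V) * diagonal (star v) * Vᴴ := by
              simp only [Matrix.mul_assoc]
          _ = _ := by rw [hVV]; simp only [Matrix.mul_assoc, Matrix.one_mul]
      rw [this, trace_mul_cycle, hVV, one_mul, diagonal_mul_diagonal, trace_diagonal]
      rfl
    rw [ht, ht2]
    conv_lhs => rw [hs', hinv V hVm, form_diagonal]
    simp only [hβ, mul_add, Finset.sum_add_distrib, star_sum]
    congr 1
    · simp [Finset.sum_mul, mul_comm]
    · rw [Finset.sum_mul_sum, Finset.mul_sum]
      simp [Finset.sum_mul, mul_comm]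
  refine ⟨x, y, fun M => ?_⟩
  obtain ⟨H, K, hH, hK, rfl⟩ := exists_cartesian M
  rw [form_cartesian β hstar H K hH hK, hherm H hH, hherm K hK]
  have htH : star H.trace = H.trace := by rw [← trace_conjTranspose, hH]
  have htK : star K.trace = K.trace := by rw [← trace_conjTranspose, hK]
  simp only [conjTranspose_add, conjTranspose_smul, hH, hK, trace_add, trace_smul, star_add,
    star_mul', htH, htK, Matrix.mul_add, Matrix.add_mul, Matrix.smul_mul, Matrix.mul_smul,
    smul_eq_mul, Complex.star_def, Complex.conj_I, trace_mul_comm K H]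
  linear_combination (x * (K * K).trace + y * (K.trace * K.trace)) * Complex.I_mul_I

/-! ### Haar average of the purity form -/

/-- The sesquilinear form whose diagonal `purityForm r P M M` is, up to the factor `r⁻²`, the contribution of the operator
`M` to the mutual purity of a code with code projector `P` of rank `r`. -/
def purityForm {n : Type*} [Fintype n] (r : ℂ) (P X Y : Matrix n n ℂ) : ℂ :=
  (P * X * P * Yᴴ).trace - r⁻¹ * ((P * X).trace * star (P * Y).trace)

theorem purityForm_conj {n : Type*} [Fintype n] [DecidableEq n] (r : ℂ) (P X Y : Matrix n n ℂ)
    {V : Matrix n n ℂ} (hV : V ∈ unitaryGroup n ℂ) :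
    purityForm r (V * P * Vᴴ) (V * X * Vᴴ) (V * Y * Vᴴ) = purityForm r P X Y := by
  have hVV : Vᴴ * V = 1 := mem_unitaryGroup_iff'.1 hV
  have hmul : ∀ A B : Matrix n n ℂ, V * A * Vᴴ * (V * B * Vᴴ) = V * (A * B) * Vᴴ := fun A B => by
    calc _ = V * A * (Vᴴ * V) * B * Vᴴ := by simp only [Matrix.mul_assoc]
      _ = _ := by rw [hVV]; simp only [Matrix.mul_assoc, Matrix.one_mul]
  have htr : ∀ A : Matrix n n ℂ, (V * A * Vᴴ).trace = A.trace := fun A => by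
    rw [trace_mul_cycle, hVV, one_mul]
  have hY : (V * Y * Vᴴ)ᴴ = V * Yᴴ * Vᴴ := by
    simp only [conjTranspose_mul, conjTranspose_conjTranspose, Matrix.mul_assoc]
  simp only [purityForm, hY, hmul, htr]

theorem purityForm_star {n : Type*} [Fintype n] (r : ℂ) (P M : Matrix n n ℂ) (hP : Pᴴ = P) :
    purityForm r P Mᴴ Mᴴ = purityForm r P M M := by
  have h1 : (P * Mᴴ).trace = star (P * M).trace := by
    rw [← trace_conjTranspose, conjTranspose_mul, hP, trace_mul_comm]
  have h2 : (P * Mᴴ * P * M).trace = (P * M * P * Mᴴ).trace := by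
    rw [Matrix.mul_assoc (P * Mᴴ), trace_mul_comm, Matrix.mul_assoc (P * M)]
  simp only [purityForm, conjTranspose_conjTranspose, h1, h2, star_star]
  ring

/-- The identity operator contributes nothing to the mutual purity. -/
theorem purityForm_one {n : Type*} [Fintype n] [DecidableEq n] {r : ℂ} (hr0 : r ≠ 0)
    (hr : star r = r) {P : Matrix n n ℂ} (hP2 : P * P = P) (ht : P.trace = r) :
    purityForm r P 1 1 = 0 := by
  simp [purityForm, hP2, ht, -Complex.star_def, hr, hr0]

/-- Summing over the matrix units gives a value that depends on the rank of the code only. -/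
theorem purityForm_sum_single {n : Type*} [Fintype n] [DecidableEq n] {r : ℂ} (hr0 : r ≠ 0)
    {P : Matrix n n ℂ} (hP2 : P * P = P) (hP : Pᴴ = P) (ht : P.trace = r) :
    ∑ a, ∑ b, purityForm r P (single a b 1) (single a b 1) = r ^ 2 - 1 := by
  have h1 : ∀ a b, purityForm r P (single a b 1) (single a b 1) =
      P a a * P b b - r⁻¹ * (P b a * P a b) := by
    intro a b
    have hs : star (P b a) = P a b := by
      conv_rhs => rw [← hP]
      rfl
    have e1 : (P * single a b 1 * P * (single a b (1:ℂ))ᴴ).trace = P b b * P a a := by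
      rw [conjTranspose_single, star_one, trace_mul_single, Matrix.mul_assoc,
        Matrix.mul_apply, Finset.sum_eq_single a]
      · simp [mul_comm]
      · intro c _ hc
        simp [hc]
      · simp
    rw [purityForm, e1, trace_mul_single]
    simp [hs, mul_comm, -Complex.star_def]
  simp only [h1, Finset.sum_sub_distrib, ← Finset.mul_sum]
  have h2 : ∑ a, ∑ b, P b a * P a b = r := by
    rw [← ht]
    conv_rhs => rw [← hP2]
    simp only [trace, diag_apply, Matrix.mul_apply]
    rw [Finset.sum_comm]
  have h3 : ∑ b, P b b = r := ht
  rw [h2, h3, ← Finset.sum_mul, h3, inv_mul_cancel₀ hr0]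
  ring

/-- Entries of a unitary matrix have modulus at most one, so the unitary group is compact and every
continuous function on it is integrable. -/
theorem purityForm_integrable {n : Type*} [Fintype n] [DecidableEq n]
    [MeasurableSpace (unitaryGroup n ℂ)] [BorelSpace (unitaryGroup n ℂ)]
    (μ : Measure (unitaryGroup n ℂ)) [IsFiniteMeasure μ] (r : ℂ) (P X Y : Matrix n n ℂ) :
    Integrable (fun U : unitaryGroup n ℂ =>
      purityForm r ((U : Matrix n n ℂ) * P * (U : Matrix n n ℂ)ᴴ) X Y) μ := by
  have hcomp : CompactSpace (unitaryGroup n ℂ) := by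
    refine (isCompact_iff_compactSpace (s := ((unitaryGroup n ℂ : Submonoid _) :
      Set (Matrix n n ℂ)))).1 ?_
    have hbox : IsCompact (Set.univ.pi fun _ : n => Set.univ.pi fun _ : n =>
        Metric.closedBall (0 : ℂ) 1) :=
      isCompact_univ_pi fun _ => isCompact_univ_pi fun _ => isCompact_closedBall _ _
    refine IsCompact.of_isClosed_subset (s := (Set.univ.pi fun _ : n => Set.univ.pi fun _ : n =>
        Metric.closedBall (0 : ℂ) 1 : Set (Matrix n n ℂ))) hbox ?_ ?_
    · have : ((unitaryGroup n ℂ : Submonoid _) : Set (Matrix n n ℂ)) = {U | U * Uᴴ = 1} := by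
        ext U
        exact mem_unitaryGroup_iff
      rw [this]
      exact isClosed_eq (continuous_id.matrix_mul continuous_id.matrix_conjTranspose)
        continuous_const
    · intro U hU i _ j _
      simpa using entry_norm_bound_of_unitary hU i j
  refine Continuous.integrable_of_hasCompactSupport ?_ (HasCompactSupport.of_compactSpace _)
  have hU : Continuous fun U : unitaryGroup n ℂ => (U : Matrix n n ℂ) := continuous_subtype_val
  have hP := (hU.matrix_mul (continuous_const (y := P))).matrix_mul hU.matrix_conjTranspose
  have hX := hP.matrix_mul (continuous_const (y := X))
  have hY := hP.matrix_mul (continuous_const (y := Y))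
  exact (((hX.matrix_mul hP).matrix_mul continuous_const).matrix_trace).sub
    (continuous_const.mul (hX.matrix_trace.mul hY.matrix_trace.star))

/-- The average of `purityForm` over the unitary orbit of a fixed matrix `P`. -/
def avgForm {n : Type*} [Fintype n] [DecidableEq n]
    [MeasurableSpace (unitaryGroup n ℂ)] [BorelSpace (unitaryGroup n ℂ)]
    (μ : Measure (unitaryGroup n ℂ)) [IsFiniteMeasure μ] (r : ℂ) (P : Matrix n n ℂ) :
    MatForm n :=
  LinearMap.mk₂'ₛₗ (RingHom.id ℂ) (starRingEnd ℂ)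
    (fun X Y => ∫ U : unitaryGroup n ℂ,
      purityForm r ((U : Matrix n n ℂ) * P * (U : Matrix n n ℂ)ᴴ) X Y ∂μ)
    (fun X X' Y => by
      rw [← integral_add (purityForm_integrable μ r P X Y) (purityForm_integrable μ r P X' Y)]
      congr 1
      ext U
      simp only [purityForm, Matrix.mul_add, Matrix.add_mul, trace_add]
      ring)
    (fun c X Y => by
      rw [← integral_smul]
      congr 1
      ext U
      simp only [purityForm, Matrix.mul_smul, Matrix.smul_mul, trace_smul, smul_eq_mul,
        RingHom.id_apply]
      ring)
    (fun X Y Y' => by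
      rw [← integral_add (purityForm_integrable μ r P X Y) (purityForm_integrable μ r P X Y')]
      congr 1
      ext U
      simp only [purityForm, Matrix.mul_add, conjTranspose_add, trace_add, star_add]
      ring)
    (fun c X Y => by
      rw [← integral_smul]
      congr 1
      ext U
      simp only [purityForm, Matrix.mul_smul, conjTranspose_smul, trace_smul, smul_eq_mul,
        star_mul', starRingEnd_apply]
      ring)

/-- The second-moment formula: the Haar average of the purity form of a rank-`r` projector.
Left invariance of `μ` makes `avgForm` unitarily invariant, so `invariant_form` applies. -/
theorem integral_purityForm {n : Type*} [Fintype n] [DecidableEq n] [Nontrivial n]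
    [MeasurableSpace (unitaryGroup n ℂ)] [BorelSpace (unitaryGroup n ℂ)]
    (μ : Measure (unitaryGroup n ℂ)) [IsProbabilityMeasure μ] [μ.IsMulLeftInvariant]
    {r : ℂ} (hr0 : r ≠ 0) (hr : star r = r)
    {P : Matrix n n ℂ} (hP2 : P * P = P) (hP : Pᴴ = P) (ht : P.trace = r) (M : Matrix n n ℂ) :
    ∫ U : unitaryGroup n ℂ,
      purityForm r ((U : Matrix n n ℂ) * P * (U : Matrix n n ℂ)ᴴ) M M ∂μ =
    (r ^ 2 - 1) / ((Fintype.card n : ℂ) ^ 2 - 1) *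
      ((M * Mᴴ).trace - (Fintype.card n : ℂ)⁻¹ * (M.trace * star M.trace)) := by
  have hUU : ∀ U : unitaryGroup n ℂ, (U : Matrix n n ℂ)ᴴ * (U : Matrix n n ℂ) = 1 :=
    fun U => mem_unitaryGroup_iff'.1 U.2
  have hQ : ∀ U : unitaryGroup n ℂ, ((U : Matrix n n ℂ) * P * (U : Matrix n n ℂ)ᴴ)ᴴ =
      (U : Matrix n n ℂ) * P * (U : Matrix n n ℂ)ᴴ := fun U => by
    simp only [conjTranspose_mul, conjTranspose_conjTranspose, hP, Matrix.mul_assoc]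
  have hQ2 : ∀ U : unitaryGroup n ℂ, ((U : Matrix n n ℂ) * P * (U : Matrix n n ℂ)ᴴ) *
      ((U : Matrix n n ℂ) * P * (U : Matrix n n ℂ)ᴴ) =
      (U : Matrix n n ℂ) * P * (U : Matrix n n ℂ)ᴴ := fun U => by
    calc _ = (U : Matrix n n ℂ) * P * ((U : Matrix n n ℂ)ᴴ * (U : Matrix n n ℂ)) * P *
          (U : Matrix n n ℂ)ᴴ := by simp only [Matrix.mul_assoc]
      _ = _ := by rw [hUU, Matrix.mul_one, Matrix.mul_assoc (U : Matrix n n ℂ), hP2]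
  have hQt : ∀ U : unitaryGroup n ℂ,
      ((U : Matrix n n ℂ) * P * (U : Matrix n n ℂ)ᴴ).trace = r := fun U => by
    rw [trace_mul_cycle, hUU, one_mul, ht]
  have happ : ∀ X Y, avgForm μ r P X Y = ∫ U : unitaryGroup n ℂ,
      purityForm r ((U : Matrix n n ℂ) * P * (U : Matrix n n ℂ)ᴴ) X Y ∂μ := fun _ _ => rfl
  obtain ⟨x, y, hxy⟩ := invariant_form (avgForm μ r P)
    (fun M => by simp only [happ, purityForm_star _ _ _ (hQ _)])
    (fun V hV X Y => by
      rw [happ, happ]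
      refine (integral_mul_left_eq_self (fun U : unitaryGroup n ℂ => purityForm r
        ((U : Matrix n n ℂ) * P * (U : Matrix n n ℂ)ᴴ) (V * X * Vᴴ) (V * Y * Vᴴ))
        (⟨V, hV⟩ : unitaryGroup n ℂ)).symm.trans (integral_congr_ae (ae_of_all _ fun U => ?_))
      beta_reduce
      have : ((⟨V, hV⟩ * U : unitaryGroup n ℂ) : Matrix n n ℂ) * P *
          ((⟨V, hV⟩ * U : unitaryGroup n ℂ) : Matrix n n ℂ)ᴴ =
          V * ((U : Matrix n n ℂ) * P * (U : Matrix n n ℂ)ᴴ) * Vᴴ := by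
        simp only [Submonoid.coe_mul, conjTranspose_mul, Matrix.mul_assoc]
      rw [this, purityForm_conj _ _ _ _ hV])
  set d : ℂ := (Fintype.card n : ℂ) with hd
  -- The identity matrix and the set of all matrix units determine the two parameters.
  have e1 : x * d + y * (d * d) = 0 := by
    have h := hxy 1
    rw [happ] at h
    simp only [purityForm_one hr0 hr (hQ2 _) (hQt _), integral_zero] at h
    simpa [hd] using h.symm
  have e2 : r ^ 2 - 1 = x * d ^ 2 + y * d := by
    have h : ∑ a, ∑ b, avgForm μ r P (single a b 1) (single a b 1) = r ^ 2 - 1 := by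
      simp only [happ]
      calc _ = ∫ U : unitaryGroup n ℂ, ∑ a, ∑ b, purityForm r
            ((U : Matrix n n ℂ) * P * (U : Matrix n n ℂ)ᴴ) (single a b 1) (single a b 1) ∂μ := by
            rw [integral_finsetSum _ fun a _ => integrable_finsetSum _ fun b _ =>
              purityForm_integrable μ r P _ _]
            refine Finset.sum_congr rfl fun a _ => ?_
            rw [integral_finsetSum _ fun b _ => purityForm_integrable μ r P _ _]
        _ = _ := by
            simp only [purityForm_sum_single hr0 (hQ2 _) (hQ _) (hQt _)]
            simp
    rw [← h]
    have hab : ∀ a b : n, avgForm μ r P (single a b 1) (single a b 1) =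
        x + if a = b then y else 0 := by
      intro a b
      rw [hxy, conjTranspose_single, single_mul_single_same]
      split_ifs with hc
      · subst hc
        simp
      · simp [trace_single_eq_of_ne _ _ _ hc]
    simp only [hab, Finset.sum_add_distrib]
    simp [hd]
    ring
  have hd0 : d ≠ 0 := by simp [hd]
  have hd1 : d ^ 2 - 1 ≠ 0 := by
    have h2 : 1 < Fintype.card n := Fintype.one_lt_card
    have : (Fintype.card n) ^ 2 ≠ 1 := by nlinarith
    intro h
    apply this
    have h' : (d ^ 2 : ℂ) = 1 := by linear_combination h
    rw [hd] at h'
    exact_mod_cast h'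
  have hy : y = -x / d := by
    field_simp
    have : d * (x + y * d) = 0 := by linear_combination e1
    linear_combination (mul_eq_zero.1 this).resolve_left hd0
  have hx : x = (r ^ 2 - 1) / (d ^ 2 - 1) := by
    rw [eq_div_iff hd1, e2, hy]
    field_simp
    ring
  rw [← happ, hxy, hy, ← hx]
  ring

/-! ### Traces of products of Kraus operators -/

/-- The tensor product of a family of matrices, as a matrix on tuples of indices. -/
def tens {ι : Type*} [Fintype ι] {n : ι → Type*} (A : ∀ i, Matrix (n i) (n i) ℂ) :
    Matrix (∀ i, n i) (∀ i, n i) ℂ :=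
  Matrix.of fun f g => ∏ i, A i (f i) (g i)

theorem tens_mul {ι : Type*} [Fintype ι] [DecidableEq ι] {n : ι → Type*} [∀ i, Fintype (n i)]
    (A B : ∀ i, Matrix (n i) (n i) ℂ) : tens A * tens B = tens fun i => A i * B i := by
  ext f g
  simp [tens, Matrix.mul_apply, Finset.prod_univ_sum, Finset.prod_mul_distrib]

theorem trace_tens {ι : Type*} [Fintype ι] [DecidableEq ι] {n : ι → Type*} [∀ i, Fintype (n i)]
    (A : ∀ i, Matrix (n i) (n i) ℂ) : (tens A).trace = ∏ i, (A i).trace := by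
  simp [tens, trace, Finset.prod_univ_sum]

theorem tens_one {ι : Type*} [Fintype ι] {n : ι → Type*} [∀ i, DecidableEq (n i)] :
    tens (fun i => (1 : Matrix (n i) (n i) ℂ)) = 1 := by
  ext f g
  simp [tens, Matrix.one_apply, Finset.prod_ite_zero, funext_iff]

/-- Distributivity of a product over sites, when only the sites of `S` carry a sum. -/
theorem sum_prod_dite {ι κ : Type*} [Fintype ι] [DecidableEq ι] [Fintype κ]
    (S : Finset ι) (F : ι → κ → ℂ) (c : ι → ℂ) :
    ∑ m : {x // x ∈ S} → κ, ∏ i, (if h : i ∈ S then F i (m ⟨i, h⟩) else c i) =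
      ∏ i, if i ∈ S then ∑ j, F i j else c i := by
  have h1 : ∀ m : {x // x ∈ S} → κ, ∏ i, (if h : i ∈ S then F i (m ⟨i, h⟩) else c i) =
      (∏ i : {x // x ∈ S}, F i (m i)) * ∏ i ∈ Finset.univ.filter (· ∉ S), c i := by
    intro m
    rw [← Finset.prod_filter_mul_prod_filter_not Finset.univ (· ∈ S)]
    congr 1
    · rw [Finset.filter_mem_eq_inter, Finset.univ_inter, ← Finset.prod_coe_sort]
      simp
    · refine Finset.prod_congr rfl fun i hi => ?_
      simp [(Finset.mem_filter.1 hi).2]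
  simp only [h1, ← Finset.sum_mul]
  rw [← Finset.prod_filter_mul_prod_filter_not Finset.univ (· ∈ S)]
  congr 1
  · rw [Finset.filter_mem_eq_inter, Finset.univ_inter, ← Finset.prod_coe_sort]
    simp only [Finset.coe_mem, if_true]
    rw [Finset.prod_univ_sum, Fintype.piFinset_univ]
  · refine Finset.prod_congr rfl fun i hi => ?_
    simp [(Finset.mem_filter.1 hi).2]

theorem krausDepol_herm (lam : ℝ) (j : Fin 4) : (krausDepol lam j)ᴴ = krausDepol lam j := by
  fin_cases j <;> ext a b <;> fin_cases a <;> fin_cases b <;> simp [krausDepol, pauli]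

theorem krausDepol_sum (lam : ℝ) (h0 : 0 ≤ lam) (h1 : lam < 3 / 4) :
    ∑ j, krausDepol lam j * krausDepol lam j = 1 := by
  have e0 : ((√(1 - lam) : ℝ) : ℂ) * ((√(1 - lam) : ℝ) : ℂ) = 1 - lam := by
    rw [← Complex.ofReal_mul, Real.mul_self_sqrt (by linarith)]
    push_cast
    ring
  have e1 : ((√(lam / 3) : ℝ) : ℂ) * ((√(lam / 3) : ℝ) : ℂ) = lam / 3 := by
    rw [← Complex.ofReal_mul, Real.mul_self_sqrt (by linarith)]
    push_cast
    ring
  ext a b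
  simp only [krausDepol, Fin.sum_univ_four, Matrix.smul_mul, Matrix.mul_smul, smul_smul, e0, e1]
  fin_cases a <;> fin_cases b <;> simp [pauli] <;> ring

theorem krausDepol_trace_sum (lam : ℝ) (h0 : 0 ≤ lam) (h1 : lam < 3 / 4) :
    ∑ j, ∑ l, (krausDepol lam j * krausDepol lam l).trace *
      star (krausDepol lam j * krausDepol lam l).trace =
        4 * (((1 - lam) ^ 2 + lam ^ 2 / 3 : ℝ) : ℂ) := by
  have e0 : ((√(1 - lam) : ℝ) : ℂ) * ((√(1 - lam) : ℝ) : ℂ) = 1 - lam := by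
    rw [← Complex.ofReal_mul, Real.mul_self_sqrt (by linarith)]
    push_cast
    ring
  have e1 : ((√(lam / 3) : ℝ) : ℂ) * ((√(lam / 3) : ℝ) : ℂ) = lam / 3 := by
    rw [← Complex.ofReal_mul, Real.mul_self_sqrt (by linarith)]
    push_cast
    ring
  simp only [krausDepol, Fin.sum_univ_four, Matrix.smul_mul, Matrix.mul_smul, smul_smul, e0, e1]
  simp [pauli, trace_fin_two]
  ring

theorem krausN_eq_tens (N : ℕ) (S : Finset (Fin N)) (lam : ℝ) (m : {x // x ∈ S} → Fin 4) :
    krausN N S lam m = tens fun i => if h : i ∈ S then krausDepol lam (m ⟨i, h⟩) else 1 := rfl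

theorem krausN_herm (N : ℕ) (S : Finset (Fin N)) (lam : ℝ) (m : {x // x ∈ S} → Fin 4) :
    (krausN N S lam m)ᴴ = krausN N S lam m := by
  ext f g
  simp only [krausN, conjTranspose_apply, of_apply, star_prod]
  refine Finset.prod_congr rfl fun i _ => ?_
  split_ifs with h
  · conv_rhs => rw [← krausDepol_herm]
    rfl
  · simp [one_apply, eq_comm, apply_ite]

theorem krausN_mul (N : ℕ) (S : Finset (Fin N)) (lam : ℝ) (m n : {x // x ∈ S} → Fin 4) :
    krausN N S lam m * krausN N S lam n = tens fun i =>
      if h : i ∈ S then krausDepol lam (m ⟨i, h⟩) * krausDepol lam (n ⟨i, h⟩) else 1 := by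
  rw [krausN_eq_tens, krausN_eq_tens, tens_mul]
  congr 1
  ext1 i
  split_ifs <;> simp

/-- The noise is trace preserving; its Kraus operators being Hermitian, it is also unital. -/
theorem krausN_sum (N : ℕ) (S : Finset (Fin N)) (lam : ℝ) (h0 : 0 ≤ lam) (h1 : lam < 3 / 4) :
    ∑ m, krausN N S lam m * krausN N S lam m = 1 := by
  rw [← tens_one]
  ext f g
  simp only [krausN_mul, Matrix.sum_apply, tens, of_apply]
  have := sum_prod_dite S
    (fun i j => (krausDepol lam j * krausDepol lam j) (f i) (g i))
    (fun i => (1 : Matrix (Fin 2) (Fin 2) ℂ) (f i) (g i))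
  simp only [← Matrix.sum_apply, krausDepol_sum lam h0 h1, ite_self] at this
  rw [← this]
  refine Finset.sum_congr rfl fun m _ => Finset.prod_congr rfl fun i _ => ?_
  split_ifs <;> rfl

/-- The traces factor over the qubits: each noisy qubit contributes `4 g(λ)`, with
`g(λ) = (1-λ)² + λ²/3`, by orthogonality of the Pauli matrices, and each noiseless one
contributes `4`. -/
theorem krausN_trace_sum (N : ℕ) (S : Finset (Fin N)) (lam : ℝ) (h0 : 0 ≤ lam)
    (h1 : lam < 3 / 4) :
    ∑ m, ∑ n, (krausN N S lam m * krausN N S lam n).trace *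
      star (krausN N S lam m * krausN N S lam n).trace =
        4 ^ N * (((1 - lam) ^ 2 + lam ^ 2 / 3 : ℝ) : ℂ) ^ S.card := by
  set t : Fin 4 → Fin 4 → ℂ := fun j l => (krausDepol lam j * krausDepol lam l).trace *
      star (krausDepol lam j * krausDepol lam l).trace with ht
  have h : ∀ m n : {x // x ∈ S} → Fin 4, (krausN N S lam m * krausN N S lam n).trace *
      star (krausN N S lam m * krausN N S lam n).trace =
      ∏ i, if h : i ∈ S then t (m ⟨i, h⟩) (n ⟨i, h⟩) else 4 := by
    intro m n
    rw [krausN_mul, trace_tens, star_prod, ← Finset.prod_mul_distrib]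
    refine Finset.prod_congr rfl fun i _ => ?_
    split_ifs
    · rfl
    · simp
      norm_num
  simp only [h]
  have h2 : ∀ m : {x // x ∈ S} → Fin 4,
      ∑ n : {x // x ∈ S} → Fin 4, ∏ i, (if h : i ∈ S then t (m ⟨i, h⟩) (n ⟨i, h⟩) else 4) =
      ∏ i, if h : i ∈ S then ∑ l, t (m ⟨i, h⟩) l else 4 := by
    intro m
    have := sum_prod_dite S (fun i l => if h : i ∈ S then t (m ⟨i, h⟩) l else 0) (fun _ => 4)
    refine Eq.trans ?_ (this.trans ?_)
    · refine Finset.sum_congr rfl fun n _ => Finset.prod_congr rfl fun i _ => ?_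
      split_ifs <;> rfl
    · refine Finset.prod_congr rfl fun i _ => ?_
      split_ifs <;> rfl
  simp only [h2]
  rw [sum_prod_dite S (fun _ j => ∑ l, t j l) (fun _ => 4)]
  simp only [ht, krausDepol_trace_sum lam h0 h1]
  have h3 : ∀ i : Fin N, (if i ∈ S then 4 * (((1 - lam) ^ 2 + lam ^ 2 / 3 : ℝ) : ℂ) else 4) =
      4 * if i ∈ S then (((1 - lam) ^ 2 + lam ^ 2 / 3 : ℝ) : ℂ) else 1 := by
    intro i
    split_ifs <;> simp
  simp only [h3, Finset.prod_mul_distrib, Finset.prod_const, Finset.card_univ, Fintype.card_fin]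
  rw [Finset.prod_ite_mem, Finset.univ_inter, Finset.prod_const]

/-! ### The mutual purity and its average -/

theorem trace_mul_expand {n m : Type*} [Fintype n] [Fintype m] (A : Matrix n m ℂ)
    (B : Matrix m n ℂ) : (A * B).trace = ∑ i, ∑ j, A i j * B j i := by
  simp [trace, Matrix.mul_apply]

/-- The mutual purity as a sum of purity forms of the operators `E_n E_m`, where `W` is the encoding isometry
and `W * Wᴴ` the code projector. Uses that the Kraus operators are Hermitian and trace preserving. -/
theorem mutualPurity_eq (N dR : ℕ) (hdR : 1 ≤ dR) (S : Finset (Fin N)) (lam : ℝ) (h0 : 0 ≤ lam)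
    (h1 : lam < 3 / 4) (emb : Fin dR → QIdx N)
    (U : Matrix (QIdx N) (QIdx N) ℂ) (W : Matrix (QIdx N) (Fin dR) ℂ)
    (hWU : ∀ a i, W a i = U a (emb i)) (hW : Wᴴ * W = 1) :
    mutualPurity N dR S lam emb U = ((dR : ℂ) ^ 2)⁻¹ * ∑ m, ∑ n,
      purityForm dR (W * Wᴴ) (krausN N S lam n * krausN N S lam m)
        (krausN N S lam n * krausN N S lam m) := by
  set E := krausN N S lam with hE
  have hEh : ∀ m, (E m)ᴴ = E m := krausN_herm N S lam
  have hE1 : ∑ m, E m * E m = 1 := krausN_sum N S lam h0 h1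
  set s : ℂ := ((Real.sqrt dR : ℝ) : ℂ)⁻¹ with hs
  have hss : s * star s = (dR : ℂ)⁻¹ := by
    have : star s = s := by simp [hs]
    rw [this, hs, ← mul_inv, ← Complex.ofReal_mul, Real.mul_self_sqrt (by positivity)]
    simp
  have hψ : ∀ i a m, psi' N dR S lam emb U (i, a, m) = s * (E m * W) a i := by
    intro i a m
    have : (U.mulVec fun q => if q = emb i then 1 else 0) = fun a => W a i := by
      ext a
      simp [mulVec, dotProduct, hWU]
    simp only [psi', this]
    rfl
  have hab : ∀ i j m n, ∑ a, psi' N dR S lam emb U (i, a, m) *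
      star (psi' N dR S lam emb U (j, a, n)) =
      (dR : ℂ)⁻¹ * (Wᴴ * (E n * E m) * W) j i := by
    intro i j m n
    have : Wᴴ * (E n * E m) * W = (E n * W)ᴴ * (E m * W) := by
      rw [conjTranspose_mul, hEh]
      simp only [Matrix.mul_assoc]
    rw [this, Matrix.mul_apply, Finset.mul_sum]
    refine Finset.sum_congr rfl fun a _ => ?_
    rw [hψ, hψ, ← hss, star_mul', conjTranspose_apply]
    ring
  have hRE : ∀ m n, (W * Wᴴ * (E n * E m) * (W * Wᴴ) * (E n * E m)ᴴ).trace =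
      ∑ i, ∑ j, (Wᴴ * (E n * E m) * W) j i * (Wᴴ * (E m * E n) * W) i j := by
    intro m n
    rw [conjTranspose_mul, hEh, hEh]
    calc _ = (W * (Wᴴ * (E n * E m) * W * Wᴴ * (E m * E n))).trace := by
          simp only [Matrix.mul_assoc]
      _ = ((Wᴴ * (E n * E m) * W) * (Wᴴ * (E m * E n) * W)).trace := by
          rw [trace_mul_comm]
          simp only [Matrix.mul_assoc]
      _ = _ := by
          rw [trace_mul_expand, Finset.sum_comm]
  have hEt : ∀ m n, (W * Wᴴ * (E n * E m)).trace = ∑ i, (Wᴴ * (E n * E m) * W) i i := by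
    intro m n
    rw [Matrix.mul_assoc, trace_mul_comm]
    rfl
  have hEs : ∀ m n, star (W * Wᴴ * (E n * E m)).trace = (W * Wᴴ * (E m * E n)).trace := by
    intro m n
    rw [← trace_conjTranspose]
    simp only [conjTranspose_mul, conjTranspose_conjTranspose, hEh]
    rw [trace_mul_comm]
  have hR : ∀ i j, ∑ a, ∑ m, psi' N dR S lam emb U (i, a, m) *
      star (psi' N dR S lam emb U (j, a, m)) = (dR : ℂ)⁻¹ * (1 : Matrix _ _ ℂ) j i := by
    intro i j
    rw [Finset.sum_comm]
    simp only [hab, ← Finset.mul_sum, ← Matrix.sum_apply]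
    rw [← Matrix.sum_mul, ← Matrix.mul_sum, hE1, Matrix.mul_one, hW]
  have hd : (dR : ℂ) ≠ 0 := by
    have : dR ≠ 0 := by omega
    exact_mod_cast this
  have hR2 : ∑ i : Fin dR, ∑ j, (dR : ℂ)⁻¹ * (1 : Matrix (Fin dR) (Fin dR) ℂ) j i *
      ((dR : ℂ)⁻¹ * (1 : Matrix (Fin dR) (Fin dR) ℂ) i j) = (dR : ℂ)⁻¹ := by
    simp [one_apply, hd]
  simp only [mutualPurity, trace_mul_expand, of_apply, hab, hR, hR2,
    Fintype.sum_prod_type]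
  simp only [← Finset.mul_sum, ← hEt]
  simp only [purityForm, hRE, hEs, Finset.mul_sum, Finset.sum_sub_distrib, mul_sub]
  congr 1
  · rw [Finset.sum_comm' (t' := Finset.univ) (s' := fun _ => Finset.univ) (by simp)]
    refine Finset.sum_congr rfl fun m _ => ?_
    rw [Finset.sum_congr rfl fun i _ => Finset.sum_comm, Finset.sum_comm]
    refine Finset.sum_congr rfl fun n _ => Finset.sum_congr rfl fun i _ =>
      Finset.sum_congr rfl fun j _ => ?_
    field_simp
  · refine Finset.sum_congr rfl fun m _ => Finset.sum_congr rfl fun n _ => ?_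
    field_simp

/-- for `N ≥ 1` qubits, a reference of dimension `d_R ≥ 1` embedded by an
injective choice `emb` of computational basis states, `k` designated noisy qubits
(`S.card = k`), depolarizing strength `0 ≤ λ < 3/4`, and any left-invariant Borel
probability measure `μ` on `U(d_A)` (`d_A = 2^N`), i.e. the normalized Haar measure,
`∫ 𝓕(U) dμ(U) = (d_A/(d_A²−1))·(1 − 1/d_R²)·(1 − g(λ)^k)` with `g(λ) = (1−λ)² + λ²/3`. -/
theorem stmt19 (N dR k : ℕ) (hN : 1 ≤ N) (hdR : 1 ≤ dR)
    (S : Finset (Fin N)) (hS : S.card = k)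
    (lam : ℝ) (h0 : 0 ≤ lam) (h1 : lam < 3 / 4)
    (emb : Fin dR → QIdx N) (hemb : Function.Injective emb)
    [MeasurableSpace (Matrix.unitaryGroup (QIdx N) ℂ)]
    [BorelSpace (Matrix.unitaryGroup (QIdx N) ℂ)]
    (μ : Measure (Matrix.unitaryGroup (QIdx N) ℂ))
    [IsProbabilityMeasure μ] [μ.IsMulLeftInvariant] :
    ∫ U : Matrix.unitaryGroup (QIdx N) ℂ,
        mutualPurity N dR S lam emb (U : Matrix (QIdx N) (QIdx N) ℂ) ∂μ =
      ((2 : ℂ) ^ N / (((2 : ℂ) ^ N) ^ 2 - 1)) * (1 - ((dR : ℂ) ^ 2)⁻¹) *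
        (1 - ((((1 - lam) ^ 2 + lam ^ 2 / 3 : ℝ)) : ℂ) ^ k) := by
  have hn : Nontrivial (QIdx N) := by
    have : Nonempty (Fin N) := ⟨⟨0, hN⟩⟩
    infer_instance
  have hd0 : (dR : ℂ) ≠ 0 := by
    have : dR ≠ 0 := by omega
    exact_mod_cast this
  set J : Matrix (QIdx N) (Fin dR) ℂ := (1 : Matrix (QIdx N) (QIdx N) ℂ).submatrix id emb with hJ
  have hJJ : Jᴴ * J = 1 := by
    ext i j
    simp [hJ, Matrix.mul_apply, one_apply, hemb.eq_iff, eq_comm]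
  have hP2 : J * Jᴴ * (J * Jᴴ) = J * Jᴴ := by
    rw [Matrix.mul_assoc, ← Matrix.mul_assoc Jᴴ, hJJ, Matrix.one_mul]
  have hP : (J * Jᴴ)ᴴ = J * Jᴴ := by
    rw [conjTranspose_mul, conjTranspose_conjTranspose]
  have ht : (J * Jᴴ).trace = dR := by
    rw [trace_mul_comm, hJJ]
    simp
  have hU : ∀ U : unitaryGroup (QIdx N) ℂ,
      mutualPurity N dR S lam emb (U : Matrix (QIdx N) (QIdx N) ℂ) =
      ((dR : ℂ) ^ 2)⁻¹ * ∑ m, ∑ n, purityForm dR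
        ((U : Matrix (QIdx N) (QIdx N) ℂ) * (J * Jᴴ) * (U : Matrix (QIdx N) (QIdx N) ℂ)ᴴ)
        (krausN N S lam n * krausN N S lam m) (krausN N S lam n * krausN N S lam m) := by
    intro U
    have hUU : (U : Matrix (QIdx N) (QIdx N) ℂ)ᴴ * (U : Matrix (QIdx N) (QIdx N) ℂ) = 1 :=
      mem_unitaryGroup_iff'.1 U.2
    rw [mutualPurity_eq N dR hdR S lam h0 h1 emb _ ((U : Matrix (QIdx N) (QIdx N) ℂ) * J)
      (fun a i => by simp [hJ, Matrix.mul_apply, one_apply])]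
    · simp only [conjTranspose_mul, Matrix.mul_assoc]
    · rw [conjTranspose_mul, Matrix.mul_assoc, ← Matrix.mul_assoc _ _ J, hUU, Matrix.one_mul, hJJ]
  simp only [hU]
  rw [integral_const_mul, integral_finsetSum _ fun m _ => integrable_finsetSum _ fun n _ =>
    purityForm_integrable μ _ _ _ _]
  have hint : ∀ m, ∫ U : unitaryGroup (QIdx N) ℂ, ∑ n, purityForm dR
        ((U : Matrix (QIdx N) (QIdx N) ℂ) * (J * Jᴴ) * (U : Matrix (QIdx N) (QIdx N) ℂ)ᴴ)
        (krausN N S lam n * krausN N S lam m) (krausN N S lam n * krausN N S lam m) ∂μ =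
      ∑ n, ((dR : ℂ) ^ 2 - 1) / ((Fintype.card (QIdx N) : ℂ) ^ 2 - 1) *
        ((krausN N S lam n * krausN N S lam m * (krausN N S lam n * krausN N S lam m)ᴴ).trace -
          (Fintype.card (QIdx N) : ℂ)⁻¹ * ((krausN N S lam n * krausN N S lam m).trace *
            star (krausN N S lam n * krausN N S lam m).trace)) := by
    intro m
    rw [integral_finsetSum _ fun n _ => purityForm_integrable μ _ _ _ _]
    refine Finset.sum_congr rfl fun n _ => ?_
    exact integral_purityForm μ hd0 (by simp) hP2 hP ht _
  simp only [hint, ← Finset.mul_sum, Finset.sum_sub_distrib]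
  -- Unitality of the noise collapses the sum of the Hilbert–Schmidt norms.
  have hHS : ∑ m, ∑ n, (krausN N S lam n * krausN N S lam m *
      (krausN N S lam n * krausN N S lam m)ᴴ).trace = 2 ^ N := by
    have h : ∀ m n, (krausN N S lam n * krausN N S lam m *
        (krausN N S lam n * krausN N S lam m)ᴴ).trace =
        (krausN N S lam n * krausN N S lam n * (krausN N S lam m * krausN N S lam m)).trace := by
      intro m n
      rw [conjTranspose_mul, krausN_herm, krausN_herm, ← Matrix.mul_assoc, trace_mul_comm]
      simp only [Matrix.mul_assoc]
    simp only [h, ← trace_sum, ← Matrix.sum_mul, krausN_sum N S lam h0 h1, Matrix.one_mul]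
    simp
  have hcard : (Fintype.card (QIdx N) : ℂ) = 2 ^ N := by simp
  rw [hHS, Finset.sum_comm, krausN_trace_sum N S lam h0 h1, hcard, hS]
  have h4 : (4 : ℂ) ^ N = 2 ^ N * 2 ^ N := by rw [← mul_pow]; norm_num
  have h2 : (2 : ℂ) ^ N ≠ 0 := pow_ne_zero _ two_ne_zero
  rw [h4]
  generalize (((1 - lam) ^ 2 + lam ^ 2 / 3 : ℝ) : ℂ) ^ k = g
  have h5 : (2 ^ N - ((2 : ℂ) ^ N)⁻¹ * (2 ^ N * 2 ^ N * g)) = 2 ^ N * (1 - g) := by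
    field_simp
  have h6 : ((dR : ℂ) ^ 2)⁻¹ * ((dR : ℂ) ^ 2 - 1) = 1 - ((dR : ℂ) ^ 2)⁻¹ := by
    field_simp
  rw [h5, ← h6]
  ring

end
end
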